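/- Let X ⊆ ℂ be a locally compact subspace and let c > 0. Then there exists a function η ∈ C₀(X) with η(z) > 0 for all z ∈ X, and for every such η the function h(z) := e^{-c|z|²}·η(z) is a *-cyclic vector for M_z in C₀(X): q·h ∈ C₀(X) for every q ∈ Π(z,z̄), and the set {q·h : q ∈ Π(z,z̄)} is dense in C₀(X) with respect to the supremum norm. -/

import Mathlib

open MeasureTheory Filter


lemma aux_eta (X : Set ℂ) [LocallyCompactSpace X] :
    ∃ η : X → ℝ, Continuous η ∧ Tendsto η (cocompact X) (nhds 0) ∧ ∀ z, 0 < η z := by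
  let K : CompactExhaustion X := default
  have h1 : ∀ n, ∃ f : C(X, ℝ), Set.EqOn f 1 (K n) ∧ Set.EqOn f 0 ∅ ∧ HasCompactSupport f ∧
      ∀ x, f x ∈ Set.Icc (0 : ℝ) 1 := fun n =>
    exists_continuous_one_zero_of_isCompact (K.isCompact n) isClosed_empty (by simp)
  choose f hf1 _ hf3 hf4 using h1
  have hb : ∀ n x, ‖(1/2 : ℝ)^n * f n x‖ ≤ (1/2 : ℝ)^n := by
    intro n x
    rw [norm_mul, Real.norm_of_nonneg (by positivity), Real.norm_of_nonneg (hf4 n x).1]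
    exact mul_le_of_le_one_right (by positivity) (hf4 n x).2
  refine ⟨fun x => ∑' n, (1/2 : ℝ)^n * f n x, ?_, ?_, ?_⟩
  · exact continuous_tsum (fun n => by fun_prop) summable_geometric_two hb
  · have := tendsto_tsum_of_dominated_convergence (𝓕 := cocompact X)
      (f := fun x n => (1/2 : ℝ)^n * f n x) (g := fun _ => (0:ℝ))
      summable_geometric_two ?_ (Eventually.of_forall fun x n => hb n x)
    · simpa using this
    · intro n
      have := ((hf3 n).is_zero_at_infty).const_mul ((1/2:ℝ)^n)
      simpa using this
  · intro z
    obtain ⟨n, hn⟩ := K.exists_mem z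
    have hs : Summable (fun n => (1/2 : ℝ)^n * f n z) :=
      Summable.of_norm_bounded summable_geometric_two (fun n => hb n z)
    refine hs.tsum_pos (fun i => mul_nonneg (by positivity) (hf4 i z).1) n ?_
    rw [hf1 n hn]; simp

lemma aux_tail (x : ℝ) (N : ℕ) :
    |Real.exp x - ∑ m ∈ Finset.range N, x ^ m / m.factorial| ≤ (1/2)^N * Real.exp (2 * |x|) := by
  have h1 : HasSum (fun m : ℕ => x ^ m / m.factorial) (Real.exp x) := by
    rw [Real.exp_eq_exp_ℝ]; exact NormedSpace.expSeries_div_hasSum_exp x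
  have h2 : HasSum (fun m : ℕ => (2*|x|) ^ m / m.factorial) (Real.exp (2*|x|)) := by
    rw [Real.exp_eq_exp_ℝ]; exact NormedSpace.expSeries_div_hasSum_exp _
  have h3 := (hasSum_nat_add_iff' N).mpr h1
  have h4 := (hasSum_nat_add_iff' N).mpr h2
  have h5 := h4.mul_left ((1/2:ℝ)^N)
  have h6 := h3.norm_le_of_bounded h5 ?_
  · refine h6.trans ?_
    gcongr
    rw [sub_le_self_iff]
    positivity
  · intro m
    rw [norm_div, norm_pow, Real.norm_eq_abs, Real.norm_of_nonneg (by positivity), ← mul_div_assoc]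
    gcongr
    rw [mul_pow, pow_add 2 m N, show (1/2:ℝ)^N * (2^m * 2^N * |x|^(m+N)) = ((1/2*2)^N) * (2^m * |x|^(m+N)) by rw [mul_pow]; ring]
    norm_num
    exact le_mul_of_one_le_left (by positivity) (one_le_pow₀ (by norm_num))

noncomputable def ev (q : MvPolynomial (Fin 2) ℂ) (z : ℂ) : ℂ :=
  MvPolynomial.eval ![z, (starRingEnd ℂ) z] q

lemma ev_cont (q : MvPolynomial (Fin 2) ℂ) : Continuous (ev q) := by
  unfold ev
  refine (MvPolynomial.continuous_eval q).comp ?_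
  refine continuous_pi fun i => ?_
  fin_cases i
  · exact continuous_id
  · exact Complex.continuous_conj

lemma ev_bound (q : MvPolynomial (Fin 2) ℂ) : ∀ b : ℝ, 0 < b →
    ∃ C : ℝ, 0 < C ∧ ∀ z : ℂ, ‖ev q z‖ ≤ C * Real.exp (b * ‖z‖^2) := by
  induction q using MvPolynomial.induction_on with
  | C a =>
    intro b hb
    refine ⟨‖a‖ + 1, by positivity, fun z => ?_⟩
    simp only [ev, MvPolynomial.eval_C]
    have : 1 ≤ Real.exp (b * ‖z‖^2) := Real.one_le_exp (by positivity)
    nlinarith [norm_nonneg a]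
  | add p q hp hq =>
    intro b hb
    obtain ⟨C, hC, h⟩ := hp b hb
    obtain ⟨D, hD, h'⟩ := hq b hb
    refine ⟨C + D, by positivity, fun z => ?_⟩
    have : ev (p + q) z = ev p z + ev q z := by simp [ev]
    rw [this]
    refine (norm_add_le _ _).trans ?_
    linarith [h z, h' z]
  | mul_X p i hp =>
    intro b hb
    obtain ⟨C, hC, h⟩ := hp (b/2) (by positivity)
    refine ⟨C * (1 + 1/(b/2)), by positivity, fun z => ?_⟩
    have h1 : ‖ev (p * MvPolynomial.X i) z‖ = ‖ev p z‖ * ‖z‖ := by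
      fin_cases i <;> simp [ev]
    have h2 : ‖z‖ ≤ (1 + 1/(b/2)) * Real.exp (b/2 * ‖z‖^2) := by
      have e1 : 1 ≤ Real.exp (b/2 * ‖z‖^2) := Real.one_le_exp (by positivity)
      have e2 : b/2 * ‖z‖^2 ≤ Real.exp (b/2 * ‖z‖^2) := by
        linarith [Real.add_one_le_exp (b/2 * ‖z‖^2)]
      have e3 : ‖z‖^2 ≤ 1/(b/2) * Real.exp (b/2 * ‖z‖^2) := by
        rw [div_mul_eq_mul_div, le_div_iff₀ (by positivity)]; linarith
      nlinarith [sq_nonneg (‖z‖ - 1)]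
    rw [h1]
    calc _ ≤ (C * Real.exp (b/2 * ‖z‖^2)) * ((1 + 1/(b/2)) * Real.exp (b/2 * ‖z‖^2)) :=
          mul_le_mul (h z) h2 (norm_nonneg _) (by positivity)
      _ = C * (1 + 1/(b/2)) * (Real.exp (b/2 * ‖z‖^2) * Real.exp (b/2 * ‖z‖^2)) := by ring
      _ = _ := by rw [← Real.exp_add]; congr 2; ring

/-- weighted approximability -/
def Appr (c : ℝ) (g : ℂ → ℂ) : Prop :=
  ∀ ε : ℝ, 0 < ε → ∃ q : MvPolynomial (Fin 2) ℂ, ∀ z : ℂ,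
    ‖ev q z - g z‖ * Real.exp (-c * ‖z‖^2) ≤ ε

noncomputable def Ef (a : ℝ) (z : ℂ) : ℂ := ((Real.exp (-(a * ‖z‖^2)) : ℝ) : ℂ)

lemma Appr_add {c : ℝ} {g g' : ℂ → ℂ} (h : Appr c g) (h' : Appr c g') :
    Appr c (fun z => g z + g' z) := by
  intro ε hε
  obtain ⟨q, hq⟩ := h (ε/2) (by positivity)
  obtain ⟨q', hq'⟩ := h' (ε/2) (by positivity)
  refine ⟨q + q', fun z => ?_⟩
  have : ev (q + q') z - (g z + g' z) = (ev q z - g z) + (ev q' z - g' z) := by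
    simp [ev]; ring
  rw [this]
  have := norm_add_le (ev q z - g z) (ev q' z - g' z)
  have e := Real.exp_pos (-c * ‖z‖^2)
  nlinarith [hq z, hq' z]

lemma Appr_pow (a : ℝ) (ha : 0 < a) (n : ℕ) : ∀ q, Appr (3*a) (fun z => ev q z * Ef a z ^ n) := by
  induction n with
  | zero => exact fun q ε hε => ⟨q, fun z => by simpa using hε.le⟩
  | succ n ih =>
    intro q ε hε
    obtain ⟨C, hC, hq⟩ := ev_bound q a ha
    obtain ⟨N, hN⟩ := exists_pow_lt_of_lt_one (show 0 < ε / 2 / C by positivity)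
      (show (1/2:ℝ) < 1 by norm_num)
    let T : MvPolynomial (Fin 2) ℂ := ∑ m ∈ Finset.range N,
      (MvPolynomial.C (-(a:ℂ)) * (MvPolynomial.X 0 * MvPolynomial.X 1)) ^ m *
        MvPolynomial.C ((m.factorial : ℂ)⁻¹)
    have hT : ∀ z, ev T z = ((∑ m ∈ Finset.range N, (-(a*‖z‖^2)) ^ m / m.factorial : ℝ) : ℂ) := by
      intro z
      have hz : z * (starRingEnd ℂ) z = ((‖z‖^2 : ℝ) : ℂ) := by
        rw [Complex.mul_conj, Complex.normSq_eq_norm_sq]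
      simp only [ev, T, map_sum, map_mul, map_pow, MvPolynomial.eval_C, MvPolynomial.eval_X,
        Matrix.cons_val_zero, Matrix.cons_val_one, hz]
      push_cast
      refine Finset.sum_congr rfl fun m _ => ?_
      rw [div_eq_mul_inv]; congr 2; ring
    obtain ⟨p, hp⟩ := ih (q * T) (ε/2) (by positivity)
    refine ⟨p, fun z => ?_⟩
    have hm : ev (q * T) z = ev q z * ev T z := by simp [ev]
    have hd : ev p z - ev q z * Ef a z ^ (n+1) = (ev p z - ev (q*T) z * Ef a z ^ n)
        - (ev q z * Ef a z ^ n * (Ef a z - ev T z)) := by rw [hm]; ring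
    have hE : ‖Ef a z‖ ≤ 1 := by
      rw [Ef, Complex.norm_real, Real.norm_of_nonneg (Real.exp_pos _).le, Real.exp_le_one_iff]
      have : 0 ≤ a * ‖z‖^2 := by positivity
      linarith
    have ht : ‖Ef a z - ev T z‖ ≤ (1/2)^N * Real.exp (2 * (a * ‖z‖^2)) := by
      rw [hT, Ef, ← Complex.ofReal_sub, Complex.norm_real, Real.norm_eq_abs]
      have := aux_tail (-(a*‖z‖^2)) N
      rwa [abs_neg, abs_of_nonneg (show 0 ≤ a * ‖z‖^2 by positivity)] at this
    have h2 : ‖ev q z * Ef a z ^ n * (Ef a z - ev T z)‖ ≤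
        (C * Real.exp (a * ‖z‖^2)) * 1 * ((1/2)^N * Real.exp (2 * (a * ‖z‖^2))) := by
      rw [norm_mul, norm_mul, norm_pow]
      gcongr
      · exact hq z
      · exact pow_le_one₀ (norm_nonneg _) hE
    have h3 : ‖ev q z * Ef a z ^ n * (Ef a z - ev T z)‖ * Real.exp (-(3*a) * ‖z‖^2) ≤ ε/2 := by
      calc _ ≤ (C * Real.exp (a * ‖z‖^2)) * 1 * ((1/2)^N * Real.exp (2 * (a * ‖z‖^2)))
              * Real.exp (-(3*a) * ‖z‖^2) := by gcongr
        _ = C * (1/2)^N * (Real.exp (a * ‖z‖^2) * Real.exp (2 * (a * ‖z‖^2))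
              * Real.exp (-(3*a) * ‖z‖^2)) := by ring
        _ = C * (1/2)^N := by
            rw [← Real.exp_add, ← Real.exp_add]
            ring_nf; simp
        _ ≤ _ := by
            rw [lt_div_iff₀ hC] at hN; linarith
    rw [hd]
    have := norm_sub_le (ev p z - ev (q*T) z * Ef a z ^ n) (ev q z * Ef a z ^ n * (Ef a z - ev T z))
    have e := Real.exp_pos (-(3*a) * ‖z‖^2)
    nlinarith [hp z]

noncomputable def ev3 (a : ℝ) (p : MvPolynomial (Fin 3) ℂ) (z : ℂ) : ℂ :=
  MvPolynomial.eval ![z, (starRingEnd ℂ) z, Ef a z] p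

lemma Appr_ev3 (a : ℝ) (ha : 0 < a) (p : MvPolynomial (Fin 3) ℂ) :
    ∀ q n, Appr (3*a) (fun z => ev3 a p z * (ev q z * Ef a z ^ n)) := by
  induction p using MvPolynomial.induction_on with
  | C b =>
    intro q n
    convert Appr_pow a ha n (MvPolynomial.C b * q) using 2 with z
    simp [ev3, ev]; ring
  | add p p' h h' =>
    intro q n
    convert Appr_add (h q n) (h' q n) using 2 with z
    simp [ev3]; ring
  | mul_X p i h =>
    intro q n
    fin_cases i
    · convert h (MvPolynomial.X 0 * q) n using 2 with z
      simp [ev3, ev]; ring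
    · convert h (MvPolynomial.X 1 * q) n using 2 with z
      simp [ev3, ev]; ring
    · convert h q (n+1) using 2 with z
      simp [ev3, ev]; ring

lemma Appr_ev3' (a : ℝ) (ha : 0 < a) (p : MvPolynomial (Fin 3) ℂ) : Appr (3*a) (ev3 a p) := by
  convert Appr_ev3 a ha p 1 0 using 2 with z
  simp [ev]

lemma ev3_conj (a : ℝ) (p : MvPolynomial (Fin 3) ℂ) :
    ∃ p', ∀ z, ev3 a p' z = (starRingEnd ℂ) (ev3 a p z) := by
  refine ⟨MvPolynomial.rename ![1, 0, 2] (MvPolynomial.map (starRingEnd ℂ) p), fun z => ?_⟩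
  unfold ev3
  rw [MvPolynomial.eval_rename, MvPolynomial.eval_map, MvPolynomial.eval, MvPolynomial.map_eval₂Hom]
  simp only [MvPolynomial.coe_eval₂Hom]
  congr 1
  funext i
  fin_cases i
  · simp
  · simp
  · exact (Complex.conj_ofReal _).symm

noncomputable def SA (a : ℝ) : StarSubalgebra ℂ C(OnePoint ℂ, ℂ) where
  carrier := {F | ∃ p, ∀ z : ℂ, F (z : OnePoint ℂ) = ev3 a p z}
  mul_mem' := by
    rintro F G ⟨p, hp⟩ ⟨q, hq⟩
    exact ⟨p * q, fun z => by simp [hp, hq, ev3]⟩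
  add_mem' := by
    rintro F G ⟨p, hp⟩ ⟨q, hq⟩
    exact ⟨p + q, fun z => by simp [hp, hq, ev3]⟩
  algebraMap_mem' := fun r => ⟨MvPolynomial.C r, fun z => by simp [ev3]⟩
  star_mem' := by
    rintro F ⟨p, hp⟩
    obtain ⟨p', h⟩ := ev3_conj a p
    exact ⟨p', fun z => by simp [hp, h]⟩

lemma tend_aux (a : ℝ) (ha : 0 < a) (q : MvPolynomial (Fin 2) ℂ) :
    Tendsto (fun z => ev q z * Ef a z) (cocompact ℂ) (nhds 0) := by
  obtain ⟨C, hC, h⟩ := ev_bound q (a/2) (by positivity)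
  have h0 : Tendsto (fun z : ℂ => C * Real.exp (-(a/2 * ‖z‖^2))) (cocompact ℂ) (nhds (C * 0)) := by
    refine Tendsto.const_mul _ ?_
    refine Real.tendsto_exp_neg_atTop_nhds_zero.comp ?_
    refine Tendsto.const_mul_atTop (by positivity) ?_
    exact (tendsto_pow_atTop two_ne_zero).comp (tendsto_norm_cocompact_atTop)
  rw [mul_zero] at h0
  refine squeeze_zero_norm (fun z => ?_) h0
  rw [norm_mul, Ef, Complex.norm_real, Real.norm_of_nonneg (Real.exp_pos _).le]
  calc _ ≤ C * Real.exp (a/2 * ‖z‖^2) * Real.exp (-(a * ‖z‖^2)) := by gcongr; exact h z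
    _ = _ := by rw [mul_assoc, ← Real.exp_add]; ring_nf

lemma Ef_cont (a : ℝ) : Continuous (Ef a) := by unfold Ef; fun_prop

noncomputable def Fq (a : ℝ) (ha : 0 < a) (q : MvPolynomial (Fin 2) ℂ) : C(OnePoint ℂ, ℂ) :=
  OnePoint.continuousMapMk ⟨fun z => ev q z * Ef a z, (ev_cont q).mul (Ef_cont a)⟩ 0
    (by simpa [coclosedCompact_eq_cocompact] using tend_aux a ha q)

lemma Fq_coe (a : ℝ) (ha : 0 < a) (q : MvPolynomial (Fin 2) ℂ) (z : ℂ) :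
    Fq a ha q (z : OnePoint ℂ) = ev q z * Ef a z := rfl

lemma Fq_infty (a : ℝ) (ha : 0 < a) (q : MvPolynomial (Fin 2) ℂ) :
    Fq a ha q OnePoint.infty = 0 := rfl

lemma Ef_ne (a : ℝ) (z : ℂ) : Ef a z ≠ 0 := by
  unfold Ef; exact_mod_cast (Real.exp_pos _).ne'

lemma SA_dense (a : ℝ) (ha : 0 < a) : (SA a).topologicalClosure = ⊤ := by
  refine ContinuousMap.starSubalgebra_topologicalClosure_eq_top_of_separatesPoints _ ?_
  have m0 : Fq a ha 1 ∈ SA a := ⟨MvPolynomial.X 2, fun z => by simp [Fq_coe, ev3, ev]⟩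
  have m1 : Fq a ha (MvPolynomial.X 0) ∈ SA a :=
    ⟨MvPolynomial.X 0 * MvPolynomial.X 2, fun z => by simp [Fq_coe, ev3, ev]⟩
  have key : ∀ x y : OnePoint ℂ, Fq a ha 1 x = Fq a ha 1 y →
      Fq a ha (MvPolynomial.X 0) x = Fq a ha (MvPolynomial.X 0) y → x = y := by
    intro x y h1 h2
    induction x using OnePoint.rec with
    | infty =>
      induction y using OnePoint.rec with
      | infty => rfl
      | coe y => rw [Fq_coe, Fq_infty] at h1; simp [ev] at h1; exact absurd h1.symm (Ef_ne a y)
    | coe x =>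
      induction y using OnePoint.rec with
      | infty => rw [Fq_coe, Fq_infty] at h1; simp [ev] at h1; exact absurd h1 (Ef_ne a x)
      | coe y =>
        rw [Fq_coe, Fq_coe] at h1 h2
        simp only [ev, map_one, one_mul] at h1
        simp only [ev, MvPolynomial.eval_X, Matrix.cons_val_zero, h1] at h2
        rw [mul_right_cancel₀ (Ef_ne a y) h2]
  intro x y hxy
  by_contra hcon
  push Not at hcon
  exact hxy (key x y (hcon _ ⟨_, m0, rfl⟩) (hcon _ ⟨_, m1, rfl⟩))

lemma Appr_C (c : ℝ) (hc : 0 < c) (F : C(OnePoint ℂ, ℂ)) : Appr c (fun z => F (z : OnePoint ℂ)) := by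
  intro ε hε
  have ha : 0 < c/3 := by positivity
  have hF : F ∈ (SA (c/3)).topologicalClosure := by rw [SA_dense _ ha]; trivial
  have hF' : F ∈ closure (SA (c/3) : Set C(OnePoint ℂ, ℂ)) := hF
  obtain ⟨G, ⟨p, hp⟩, hG⟩ := Metric.mem_closure_iff.1 hF' (ε/2) (by positivity)
  have := Appr_ev3' (c/3) ha p
  rw [show 3 * (c/3) = c by ring] at this
  obtain ⟨q, hq⟩ := this (ε/2) (by positivity)
  refine ⟨q, fun z => ?_⟩
  have h1 : ‖ev3 (c/3) p z - F z‖ ≤ ε/2 := by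
    rw [← hp, ← dist_eq_norm, dist_comm]
    exact (ContinuousMap.dist_apply_le_dist _).trans hG.le
  have h2 : Real.exp (-c * ‖z‖^2) ≤ 1 := by
    rw [Real.exp_le_one_iff]
    nlinarith [sq_nonneg ‖z‖]
  have h3 := norm_sub_le_norm_sub_add_norm_sub (ev q z) (ev3 (c/3) p z) (F z)
  have e := Real.exp_pos (-c * ‖z‖^2)
  have := hq z
  nlinarith [norm_nonneg (ev3 (c/3) p z - F z)]

lemma C0_bdd {X : Type*} [TopologicalSpace X] {E : Type*} [NormedAddCommGroup E] (f : X → E)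
    (hf : Continuous f) (h0 : Tendsto f (cocompact X) (nhds 0)) :
    ∃ M : ℝ, 0 < M ∧ ∀ z, ‖f z‖ ≤ M := by
  let g : ZeroAtInftyContinuousMap X E := ⟨⟨f, hf⟩, h0⟩
  refine ⟨‖g.toBCF‖ + 1, by positivity, fun z => ?_⟩
  have := g.toBCF.norm_coe_le_norm z
  have e : g.toBCF z = f z := rfl
  rw [e] at this
  linarith

lemma C0_small {X : Type*} [TopologicalSpace X] {E : Type*} [NormedAddCommGroup E] (f : X → E)
    (h0 : Tendsto f (cocompact X) (nhds 0)) (ε : ℝ) (hε : 0 < ε) :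
    ∃ K : Set X, IsCompact K ∧ ∀ z ∉ K, ‖f z‖ < ε := by
  have h1 : ∀ᶠ z in cocompact X, ‖f z‖ < ε := by
    have := h0.norm
    rw [norm_zero] at this
    exact this.eventually (gt_mem_nhds hε)
  obtain ⟨K, hK, h⟩ := mem_cocompact.1 h1
  exact ⟨K, hK, fun z hz => h hz⟩

lemma dens (X : Set ℂ) (c : ℝ) (hc : 0 < c) (η : X → ℝ) (hη : Continuous η)
    (hη0 : Tendsto η (cocompact X) (nhds 0)) (hpos : ∀ z, 0 < η z)
    (f : X → ℂ) (hf : Continuous f) (hf0 : Tendsto f (cocompact X) (nhds 0))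
    (ε : ℝ) (hε : 0 < ε) :
    ∃ q : MvPolynomial (Fin 2) ℂ, ∀ z : X,
      ‖ev q z * ((Real.exp (-c * ‖(z : ℂ)‖ ^ 2) * η z : ℝ) : ℂ) - f z‖ < ε := by
  obtain ⟨H, hH, hηH⟩ := C0_bdd η hη hη0
  obtain ⟨M, hM, hfM⟩ := C0_bdd f hf hf0
  set h : X → ℝ := fun z => Real.exp (-c * ‖(z : ℂ)‖ ^ 2) * η z with hh
  have hhc : Continuous h := by fun_prop
  have hhp : ∀ z, 0 < h z := fun z => mul_pos (Real.exp_pos _) (hpos z)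
  have hhη : ∀ z, h z ≤ η z := fun z => by
    refine mul_le_of_le_one_left (hpos z).le ?_
    rw [Real.exp_le_one_iff]
    nlinarith [sq_nonneg ‖(z:ℂ)‖]
  obtain ⟨K1, hK1, hf1⟩ := C0_small f hf0 (ε/4) (by positivity)
  obtain ⟨m, hm, hmK⟩ := hK1.exists_forall_le' hhc.continuousOn (fun z _ => hhp z)
  obtain ⟨δ, hδ, hδM⟩ : ∃ δ : ℝ, 0 < δ ∧ M * δ = ε/4 * m :=
    ⟨ε/4 * m / M, by positivity, by field_simp⟩
  let k : X → ℂ := fun z => f z / ((h z + δ : ℝ) : ℂ)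
  have hne : ∀ z, ((h z + δ : ℝ) : ℂ) ≠ 0 := fun z => by
    exact_mod_cast (by linarith [hhp z] : (0:ℝ) < h z + δ).ne'
  have hkc : Continuous k := by
    refine hf.div ?_ hne
    fun_prop
  have hkB : ∀ z, ‖k z‖ ≤ M / δ := fun z => by
    simp only [k]
    rw [norm_div, Complex.norm_real, Real.norm_of_nonneg (by linarith [hhp z])]
    gcongr
    · exact hfM z
    · linarith [hhp z]
  have hkf : ∀ z, ‖k z * (h z : ℂ) - f z‖ ≤ ε/4 := fun z => by
    have e : k z * (h z : ℂ) - f z = - (f z * (δ / ((h z + δ : ℝ) : ℂ))) := by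
      simp only [k]
      have := hne z
      field_simp
      push_cast
      ring
    have hp : 0 < h z + δ := by linarith [hhp z]
    rw [e, norm_neg, norm_mul, norm_div, Complex.norm_real, Complex.norm_real,
      Real.norm_of_nonneg hδ.le, Real.norm_of_nonneg hp.le, ← mul_div_assoc, div_le_iff₀ hp]
    by_cases hz : z ∈ K1
    · have a1 := hmK z hz
      have a2 := hfM z
      nlinarith
    · have a1 := hf1 z hz
      have a2 := hhp z
      nlinarith
  set B := M / δ with hB
  have hBp : 0 < B := by positivity
  obtain ⟨K2, hK2, hη2⟩ := C0_small η hη0 (ε/4/(2*B)) (by positivity)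
  haveI : CompactSpace K2 := isCompact_iff_compactSpace.1 hK2
  let e : K2 → OnePoint ℂ := fun z => (((z : X) : ℂ) : OnePoint ℂ)
  have he : Topology.IsClosedEmbedding e := by
    refine Continuous.isClosedEmbedding ?_ ?_
    · exact OnePoint.continuous_coe.comp (continuous_subtype_val.comp continuous_subtype_val)
    · intro x y hxy
      exact Subtype.ext (Subtype.ext (OnePoint.coe_injective hxy))
  haveI := Metric.instTietzeExtensionClosedBall.{0, 0} ℂ (0 : ℂ) hBp
  obtain ⟨F, hFB, hFk⟩ := ContinuousMap.exists_extension_forall_mem he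
    (⟨fun z => k z, hkc.comp continuous_subtype_val⟩ : C(K2, ℂ))
    (t := Metric.closedBall (0:ℂ) B) (fun x => by simpa using hkB x)
  obtain ⟨q, hq⟩ := Appr_C c hc F (ε/4/H) (by positivity)
  refine ⟨q, fun z => ?_⟩
  change ‖ev q z * (h z : ℂ) - f z‖ < ε
  have t1 : ‖(ev q z - F ((z : ℂ) : OnePoint ℂ)) * (h z : ℂ)‖ ≤ ε/4 := by
    rw [norm_mul, Complex.norm_real, Real.norm_of_nonneg (hhp z).le]
    simp only [hh]
    rw [← mul_assoc]
    have a1 := hq z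
    have a2 := hηH z
    rw [Real.norm_of_nonneg (hpos z).le] at a2
    calc _ ≤ ε/4/H * H := mul_le_mul a1 a2 (hpos z).le (by positivity)
      _ = _ := by field_simp
  have t2 : ‖(F ((z : ℂ) : OnePoint ℂ) - k z) * (h z : ℂ)‖ ≤ ε/4 := by
    by_cases hz : z ∈ K2
    · have : F ((z : ℂ) : OnePoint ℂ) = k z := congrArg (fun G : C(K2, ℂ) => G ⟨z, hz⟩) hFk
      rw [this, sub_self, zero_mul, norm_zero]; positivity
    · rw [norm_mul, Complex.norm_real, Real.norm_of_nonneg (hhp z).le]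
      have a1 := hη2 z hz
      rw [Real.norm_of_nonneg (hpos z).le] at a1
      have a2 : ‖F ((z : ℂ) : OnePoint ℂ)‖ ≤ B := by simpa using hFB ((z : ℂ) : OnePoint ℂ)
      have a3 : ‖F ((z : ℂ) : OnePoint ℂ) - k z‖ ≤ 2 * B := by
        have := norm_sub_le (F ((z : ℂ) : OnePoint ℂ)) (k z)
        linarith [hkB z]
      calc _ ≤ (2*B) * (ε/4/(2*B)) :=
            mul_le_mul a3 ((hhη z).trans a1.le) (hhp z).le (by positivity)
        _ = _ := by field_simp
  have t3 := hkf z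
  have : ev q z * (h z : ℂ) - f z = (ev q z - F ((z : ℂ) : OnePoint ℂ)) * (h z : ℂ) +
    (F ((z : ℂ) : OnePoint ℂ) - k z) * (h z : ℂ) + (k z * (h z : ℂ) - f z) := by ring
  rw [this]
  refine (norm_add₃_le).trans_lt ?_
  linarith

lemma isC0 (X : Set ℂ) (c : ℝ) (hc : 0 < c) (η : X → ℝ) (hη : Continuous η)
    (hη0 : Tendsto η (cocompact X) (nhds 0)) (q : MvPolynomial (Fin 2) ℂ) :
    Continuous (fun z : X => ev q z * ((Real.exp (-c * ‖(z : ℂ)‖ ^ 2) * η z : ℝ) : ℂ)) ∧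
    Tendsto (fun z : X => ev q z * ((Real.exp (-c * ‖(z : ℂ)‖ ^ 2) * η z : ℝ) : ℂ))
      (cocompact X) (nhds 0) := by
  constructor
  · have := (ev_cont q).comp (continuous_subtype_val (p := fun z => z ∈ X))
    refine this.mul ?_
    fun_prop
  · obtain ⟨C, hC, h⟩ := ev_bound q c hc
    have h0 : Tendsto (fun z => C * ‖η z‖) (cocompact X) (nhds 0) := by
      simpa using hη0.norm.const_mul C
    refine squeeze_zero_norm (fun z => ?_) h0
    rw [norm_mul, Complex.norm_real, norm_mul, Real.norm_of_nonneg (Real.exp_pos _).le, ← mul_assoc]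
    gcongr
    calc _ ≤ C * Real.exp (c * ‖(z:ℂ)‖^2) * Real.exp (-c * ‖(z:ℂ)‖^2) := by gcongr; exact h z
      _ = C := by rw [mul_assoc, ← Real.exp_add]; simp

/-- For a locally compact subspace `X ⊆ ℂ` and `c > 0` there is a strictly positive
`η ∈ C₀(X)`, and for every such `η` the function `h(z) = e^{-c|z|²}·η(z)` is a `*`-cyclic
vector for `M_z` in `C₀(X)`: `q·h ∈ C₀(X)` for all `q ∈ Π(z,z̄)` and `{q·h : q ∈ Π(z,z̄)}`
is dense in `C₀(X)` for the sup norm. -/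
theorem stmt_10 (X : Set ℂ) [LocallyCompactSpace X] (c : ℝ) (hc : 0 < c) :
    (∃ η : X → ℝ, Continuous η ∧ Tendsto η (cocompact X) (nhds 0) ∧ ∀ z, 0 < η z) ∧
    (∀ η : X → ℝ, Continuous η → Tendsto η (cocompact X) (nhds 0) → (∀ z, 0 < η z) →
      (∀ q : MvPolynomial (Fin 2) ℂ,
        Continuous (fun z : X =>
          MvPolynomial.eval ![(z : ℂ), (starRingEnd ℂ) (z : ℂ)] q *
            ((Real.exp (-c * ‖(z : ℂ)‖ ^ 2) * η z : ℝ) : ℂ)) ∧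
        Tendsto (fun z : X =>
          MvPolynomial.eval ![(z : ℂ), (starRingEnd ℂ) (z : ℂ)] q *
            ((Real.exp (-c * ‖(z : ℂ)‖ ^ 2) * η z : ℝ) : ℂ)) (cocompact X) (nhds 0)) ∧
      (∀ f : X → ℂ, Continuous f → Tendsto f (cocompact X) (nhds 0) → ∀ ε : ℝ, 0 < ε →
        ∃ q : MvPolynomial (Fin 2) ℂ, ∀ z : X,
          ‖MvPolynomial.eval ![(z : ℂ), (starRingEnd ℂ) (z : ℂ)] q *
            ((Real.exp (-c * ‖(z : ℂ)‖ ^ 2) * η z : ℝ) : ℂ) - f z‖ < ε)) := by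
  exact ⟨aux_eta X, fun η hη hη0 hpos => ⟨fun q => isC0 X c hc η hη hη0 q,
    fun f hf hf0 ε hε => dens X c hc η hη hη0 hpos f hf hf0 ε hε⟩⟩
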